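/- There exists a unique real number μ > 1 such that li(μ) = 0 (the Ramanujan–Soldner constant), and it satisfies 1.4513 < μ < 1.4514. -/

import Mathlib

open Real Filter Set

/-- `IsLi x L` means the Cauchy principal value `li(x) = v.p. ∫₀ˣ dt/log t` exists and
equals `L`. -/
def IsLi (x L : ℝ) : Prop :=
  Tendsto
    (fun ε : ℝ =>
      (∫ t in (0:ℝ)..(1 - ε), 1 / Real.log t) + ∫ t in (1 + ε)..x, 1 / Real.log t)
    (nhdsWithin 0 (Set.Ioi 0)) (nhds L)

/-!
On `(0, 1)` the integrand `1 / log t` has the simple pole `1 / (t - 1)` at `t = 1`. Once it is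
removed the rest is bounded and its integral is `γ`: write
`(tⁿ - 1) / log t = ∑_{k < n} tᵏ - (1 - tⁿ) (1 / log t - 1 / (t - 1))`, use
`∫₀¹ (tⁿ - 1) / log t = log (n + 1)`, and let `n → ∞`. Estimating the remainder for a fixed `n`
also locates `γ` numerically.

In the principal value, the pole contributes `log ε` on the left of `1`, and `log (log (1 + ε))`
cancels it on the right, so that `li x = γ + log (log x) + ∑_{k ≥ 1} (log x)ᵏ / (k · k!)` for
`x > 1`. This function has derivative `1 / log x > 0`, and truncating the series shows that it
changes sign between `1.4513 < exp 0.37247` and `exp 0.37252 < 1.4514`.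
-/

open MeasureTheory
open scoped Topology Nat

lemma log_le_half_sub_inv {y : ℝ} (hy : 1 ≤ y) : log y ≤ (y - y⁻¹) / 2 := by
  rw [← sinh_log (by positivity)]
  exact self_le_sinh_iff.2 (log_nonneg hy)

lemma two_mul_sub_one_div_add_one_le_log {y : ℝ} (hy : 1 ≤ y) :
    2 * (y - 1) / (y + 1) ≤ log y := by
  convert le_log_one_add_of_nonneg (sub_nonneg.2 hy) using 2 <;> ring

/-- The integrand of `li` with its simple pole at `1` removed. -/
noncomputable def regInvLog (t : ℝ) : ℝ := 1 / log t - 1 / (t - 1)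

lemma regInvLog_mem_Icc {t : ℝ} (h₀ : 0 < t) (h₁ : t < 1) :
    regInvLog t ∈ Icc (1 / 2) (1 + t)⁻¹ := by
  have one_le_inv : 1 ≤ t⁻¹ := (one_le_inv₀ h₀).2 h₁.le
  have sub_pos : 0 < 1 - t := by linarith
  have log_lower : 2 * (1 - t) / (1 + t) ≤ -log t := by
    have h := two_mul_sub_one_div_add_one_le_log one_le_inv
    rw [log_inv] at h
    convert h using 1
    field_simp
  have log_upper : -log t ≤ (1 - t) * (1 + t) / (2 * t) := by
    have h := log_le_half_sub_inv one_le_inv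
    rw [log_inv, inv_inv] at h
    convert h using 1
    field_simp
    ring
  have inv_upper : 1 / (-log t) ≤ (1 + t) / (2 * (1 - t)) := by
    simpa only [one_div_div] using one_div_le_one_div_of_le (by positivity) log_lower
  have inv_lower : 2 * t / ((1 - t) * (1 + t)) ≤ 1 / (-log t) := by
    simpa only [one_div_div] using
      one_div_le_one_div_of_le (neg_pos.2 (log_neg h₀ h₁)) log_upper
  have regInvLog_eq : regInvLog t = 1 / (1 - t) - 1 / (-log t) := by
    rw [regInvLog, ← neg_sub 1 t, div_neg, div_neg]
    ring
  have lower_eq : 1 / (1 - t) - (1 + t) / (2 * (1 - t)) = 1 / 2 := by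
    field_simp
    ring
  have upper_eq : 1 / (1 - t) - 2 * t / ((1 - t) * (1 + t)) = (1 + t)⁻¹ := by
    field_simp
    ring
  constructor <;> linarith

lemma intervalIntegrable_regInvLog {a b : ℝ} (ha : a ∈ Icc (0 : ℝ) 1) (hb : b ∈ Icc (0 : ℝ) 1) :
    IntervalIntegrable regInvLog volume a b := by
  suffices IntegrableOn regInvLog (Icc 0 1) from
    (this.mono_set (uIcc_subset_Icc ha hb)).intervalIntegrable
  rw [integrableOn_Icc_iff_integrableOn_Ioo]
  have measurable_regInvLog : Measurable regInvLog := by unfold regInvLog; fun_prop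
  refine Measure.integrableOn_of_bounded (M := 1) (by simp)
    measurable_regInvLog.aestronglyMeasurable (ae_restrict_of_forall_mem measurableSet_Ioo ?_)
  rintro t ⟨h₀, h₁⟩
  obtain ⟨lower, upper⟩ := regInvLog_mem_Icc h₀ h₁
  rw [norm_of_nonneg (by linarith)]
  exact upper.trans (inv_le_one_of_one_le₀ (by linarith))

lemma integral_rpow_sub_one_div_log {a : ℝ} (ha : 0 ≤ a) :
    ∫ t in (0 : ℝ)..1, (t ^ a - 1) / log t = log (a + 1) := by
  have integral_exponent {t : ℝ} (h₀ : 0 < t) (h₁ : t < 1) :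
      ∫ s in (0 : ℝ)..a, t ^ s = (t ^ a - 1) / log t := by
    have hlog : log t ≠ 0 := (log_neg h₀ h₁).ne
    simp_rw [rpow_def_of_pos h₀]
    rw [intervalIntegral.integral_comp_mul_left _ hlog, integral_exp]
    simp [div_eq_inv_mul]
  have integral_base {s : ℝ} (hs : 0 ≤ s) : ∫ t in (0 : ℝ)..1, t ^ s = (s + 1)⁻¹ := by
    rw [integral_rpow (Or.inl (by linarith)), one_rpow, zero_rpow (by linarith), sub_zero, one_div]
  have integrable_rpow :
      IntegrableOn (Function.uncurry fun t s : ℝ => t ^ s) (uIoc 0 1 ×ˢ uIoc 0 a) := by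
    rw [uIoc_of_le zero_le_one, uIoc_of_le ha]
    refine Measure.integrableOn_of_bounded (M := 1) ?_
      (measurable_fst.pow measurable_snd).aestronglyMeasurable
      (ae_restrict_of_forall_mem (measurableSet_Ioc.prod measurableSet_Ioc) ?_)
    · rw [Measure.volume_eq_prod, Measure.prod_prod]
      simp
    · rintro ⟨t, s⟩ ⟨ht, hs⟩
      simpa [abs_of_nonneg (rpow_nonneg ht.1.le s)] using rpow_le_one ht.1.le ht.2 hs.1.le
  calc ∫ t in (0 : ℝ)..1, (t ^ a - 1) / log t
      = ∫ t in (0 : ℝ)..1, ∫ s in (0 : ℝ)..a, t ^ s :=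
        intervalIntegral.integral_congr_Ioo_of_le zero_le_one
          fun t ht => (integral_exponent ht.1 ht.2).symm
    _ = ∫ s in (0 : ℝ)..a, ∫ t in (0 : ℝ)..1, t ^ s :=
        intervalIntegral_intervalIntegral_swap integrable_rpow
    _ = ∫ s in (0 : ℝ)..a, (s + 1)⁻¹ :=
        intervalIntegral.integral_congr fun s hs => integral_base (uIcc_of_le ha ▸ hs).1
    _ = log (a + 1) := by
        rw [intervalIntegral.integral_comp_add_right (fun s => s⁻¹),
          integral_inv_of_pos (by linarith) (by linarith)]
        simp

lemma intervalIntegrable_pow_mul_regInvLog (n : ℕ) :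
    IntervalIntegrable (fun t => t ^ n * regInvLog t) volume 0 1 :=
  (intervalIntegrable_regInvLog (left_mem_Icc.2 zero_le_one)
    (right_mem_Icc.2 zero_le_one)).continuousOn_mul (by fun_prop)

lemma integral_geom_sum (n : ℕ) :
    ∫ t in (0 : ℝ)..1, ∑ k ∈ Finset.range n, t ^ k = harmonic n := by
  rw [intervalIntegral.integral_finsetSum fun k _ =>
    (continuous_pow k).intervalIntegrable 0 1]
  simp [harmonic, integral_pow]

lemma integral_regInvLog_eq_harmonic (n : ℕ) :
    ∫ t in (0 : ℝ)..1, regInvLog t =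
      harmonic n - log (n + 1) + ∫ t in (0 : ℝ)..1, t ^ n * regInvLog t := by
  have split {t : ℝ} (ht : t ∈ Ioo (0 : ℝ) 1) : (t ^ (n : ℝ) - 1) / log t =
      (∑ k ∈ Finset.range n, t ^ k) - (regInvLog t - t ^ n * regInvLog t) := by
    have hlog : log t ≠ 0 := (log_neg ht.1 ht.2).ne
    have hsub : t - 1 ≠ 0 := sub_ne_zero.2 ht.2.ne
    rw [rpow_natCast, geom_sum_eq ht.2.ne, regInvLog]
    field_simp
    ring
  have integrable_reg := by simpa using intervalIntegrable_pow_mul_regInvLog 0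
  have integrable_pow_reg := intervalIntegrable_pow_mul_regInvLog n
  have integrable_geom :
      IntervalIntegrable (fun t : ℝ => ∑ k ∈ Finset.range n, t ^ k) volume 0 1 :=
    (by fun_prop : Continuous _).intervalIntegrable 0 1
  have integral_split := integral_rpow_sub_one_div_log (Nat.cast_nonneg n)
  rw [intervalIntegral.integral_congr_Ioo_of_le zero_le_one fun t ht => split ht,
    intervalIntegral.integral_sub integrable_geom (integrable_reg.sub integrable_pow_reg),
    intervalIntegral.integral_sub integrable_reg integrable_pow_reg,
    integral_geom_sum] at integral_split
  linarith

lemma integral_pow_mul_regInvLog_mem_Icc (n : ℕ) :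
    ∫ t in (0 : ℝ)..1, t ^ n * regInvLog t ∈
      Icc (1 / (2 * (n + 1)) : ℝ) (1 / (n + 1) - 1 / (2 * (n + 2))) := by
  have integral_lower : ∫ t in (0 : ℝ)..1, t ^ n * (1 / 2) = 1 / (2 * (n + 1)) := by
    rw [intervalIntegral.integral_mul_const, integral_pow, one_pow, zero_pow n.succ_ne_zero,
      sub_zero]
    field_simp
  have integral_upper :
      ∫ t in (0 : ℝ)..1, (t ^ n - t ^ (n + 1) * (1 / 2)) = 1 / (n + 1) - 1 / (2 * (n + 2)) := by
    rw [intervalIntegral.integral_sub (Continuous.intervalIntegrable (by fun_prop) _ _)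
      (Continuous.intervalIntegrable (by fun_prop) _ _),
      intervalIntegral.integral_mul_const, integral_pow, integral_pow, one_pow, one_pow,
      zero_pow n.succ_ne_zero, zero_pow (n + 1).succ_ne_zero, sub_zero]
    push_cast
    field_simp
    ring
  constructor
  · rw [← integral_lower]
    refine intervalIntegral.integral_mono_on_of_le_Ioo zero_le_one
      (Continuous.intervalIntegrable (by fun_prop) _ _)
      (intervalIntegrable_pow_mul_regInvLog n) fun t ⟨h₀, h₁⟩ => ?_
    exact mul_le_mul_of_nonneg_left (regInvLog_mem_Icc h₀ h₁).1 (by positivity)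
  · rw [← integral_upper]
    refine intervalIntegral.integral_mono_on_of_le_Ioo zero_le_one
      (intervalIntegrable_pow_mul_regInvLog n)
      (Continuous.intervalIntegrable (by fun_prop) _ _) fun t ⟨h₀, h₁⟩ => ?_
    have chord : (1 + t)⁻¹ ≤ 1 - t / 2 := by
      rw [inv_le_iff_one_le_mul₀ (by positivity)]
      nlinarith
    calc t ^ n * regInvLog t ≤ t ^ n * (1 - t / 2) :=
          mul_le_mul_of_nonneg_left ((regInvLog_mem_Icc h₀ h₁).2.trans chord) (by positivity)
      _ = t ^ n - t ^ (n + 1) * (1 / 2) := by ring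

lemma tendsto_integral_pow_mul_regInvLog :
    Tendsto (fun n : ℕ => ∫ t in (0 : ℝ)..1, t ^ n * regInvLog t) atTop (𝓝 0) := by
  refine squeeze_zero (fun n => ?_) (fun n => ?_) tendsto_one_div_add_atTop_nhds_zero_nat
  · exact le_trans (by positivity) (integral_pow_mul_regInvLog_mem_Icc n).1
  · exact (integral_pow_mul_regInvLog_mem_Icc n).2.trans (sub_le_self _ (by positivity))

theorem integral_regInvLog : ∫ t in (0 : ℝ)..1, regInvLog t = eulerMascheroniConstant := by
  refine tendsto_nhds_unique (tendsto_const_nhds (f := atTop (α := ℕ))) ?_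
  simpa [← integral_regInvLog_eq_harmonic] using
    tendsto_harmonic_sub_log_add_one.add tendsto_integral_pow_mul_regInvLog

lemma eulerMascheroniConstant_sub_mem_Icc (n : ℕ) :
    eulerMascheroniConstant - (harmonic n - log (n + 1)) ∈
      Icc (1 / (2 * (n + 1)) : ℝ) (1 / (n + 1) - 1 / (2 * (n + 2))) := by
  rw [← integral_regInvLog, integral_regInvLog_eq_harmonic n, add_sub_cancel_left]
  exact integral_pow_mul_regInvLog_mem_Icc n

lemma eulerMascheroniConstant_mem_Ioo : eulerMascheroniConstant ∈ Ioo 0.5772 0.5773 := by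
  have log_128 : log ((127 : ℕ) + 1) = 7 * log 2 := by
    rw [show ((127 : ℕ) + 1 : ℝ) = 2 ^ 7 by norm_num, log_pow]
    norm_num
  obtain ⟨lower, upper⟩ := eulerMascheroniConstant_sub_mem_Icc 127
  rw [log_128] at lower upper
  have harmonic_mem : (harmonic 127 : ℝ) ∈ Icc 5.42533 5.42534 := by
    norm_num [harmonic, Finset.sum_range_succ]
  have := log_two_gt_d9
  have := log_two_lt_d9
  norm_num at lower upper harmonic_mem ⊢
  constructor <;> linarith

/-- The entire part `∫₀ᵘ (eˢ - 1) / s ds = ∑_{k ≥ 1} uᵏ / (k · k!)` of the exponential integral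
`Ei`. The integrand is written as `dslope exp 0`, which extends it continuously to `s = 0`. -/
noncomputable def eiEntire (u : ℝ) : ℝ := ∫ s in (0 : ℝ)..u, dslope exp 0 s

lemma dslope_exp_zero_of_ne {s : ℝ} (hs : s ≠ 0) : dslope exp 0 s = (exp s - 1) / s := by
  rw [dslope_of_ne _ hs, slope_def_field, exp_zero, sub_zero]

lemma continuous_dslope_exp_zero : Continuous (dslope exp 0) := by
  rw [← continuousOn_univ, continuousOn_dslope univ_mem]
  exact ⟨continuous_exp.continuousOn, differentiableAt_exp⟩

lemma hasDerivAt_eiEntire (u : ℝ) : HasDerivAt eiEntire (dslope exp 0 u) u :=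
  (continuous_dslope_exp_zero.integral_hasStrictDerivAt 0 u).hasDerivAt

lemma integral_sum_pow_div_factorial (n : ℕ) (u : ℝ) :
    ∫ s in (0 : ℝ)..u, ∑ k ∈ Finset.range n, s ^ k / (k + 1)! =
      ∑ k ∈ Finset.range n, u ^ (k + 1) / ((k + 1) * (k + 1)!) := by
  rw [intervalIntegral.integral_finsetSum fun k _ =>
    Continuous.intervalIntegrable (by fun_prop) 0 u]
  simp [integral_pow, div_div]

lemma sum_pow_div_factorial_succ_mul (n : ℕ) (s : ℝ) :
    1 + (∑ k ∈ Finset.range n, s ^ k / (k + 1)!) * s = ∑ k ∈ Finset.range (n + 1), s ^ k / k ! := by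
  rw [Finset.sum_range_succ', Finset.sum_mul, add_comm]
  simp [pow_succ, div_mul_eq_mul_div]

lemma sum_le_eiEntire {u : ℝ} (hu : 0 ≤ u) (n : ℕ) :
    ∑ k ∈ Finset.range n, u ^ (k + 1) / ((k + 1) * (k + 1)!) ≤ eiEntire u := by
  rw [← integral_sum_pow_div_factorial]
  refine intervalIntegral.integral_mono_on_of_le_Ioo hu
    (Continuous.intervalIntegrable (by fun_prop) _ _)
    (continuous_dslope_exp_zero.intervalIntegrable _ _) fun s hs => ?_
  rw [dslope_exp_zero_of_ne hs.1.ne', le_div_iff₀ hs.1, le_sub_iff_add_le',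
    sum_pow_div_factorial_succ_mul]
  exact sum_le_exp_of_nonneg hs.1.le _

lemma eiEntire_le_sum_add {u : ℝ} (hu₀ : 0 ≤ u) (hu₁ : u ≤ 1) (n : ℕ) :
    eiEntire u ≤ (∑ k ∈ Finset.range n, u ^ (k + 1) / ((k + 1) * (k + 1)!)) +
      u ^ (n + 1) * (n + 2) / ((n + 1)! * (n + 1) ^ 2) := by
  have integral_remainder : ∫ s in (0 : ℝ)..u, s ^ n * ((n + 2) / ((n + 1)! * (n + 1))) =
      u ^ (n + 1) * (n + 2) / ((n + 1)! * (n + 1) ^ 2) := by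
    rw [intervalIntegral.integral_mul_const, integral_pow, zero_pow n.succ_ne_zero, sub_zero]
    field_simp
  have continuous_sum : Continuous fun s : ℝ => ∑ k ∈ Finset.range n, s ^ k / (k + 1)! := by
    fun_prop
  have continuous_remainder :
      Continuous fun s : ℝ => s ^ n * ((n + 2) / ((n + 1)! * (n + 1))) := by
    fun_prop
  rw [← integral_sum_pow_div_factorial, ← integral_remainder,
    ← intervalIntegral.integral_add (continuous_sum.intervalIntegrable _ _)
      (continuous_remainder.intervalIntegrable _ _)]
  refine intervalIntegral.integral_mono_on_of_le_Ioo hu₀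
    (continuous_dslope_exp_zero.intervalIntegrable _ _)
    ((continuous_sum.add continuous_remainder).intervalIntegrable _ _) fun s hs => ?_
  have exp_le := exp_bound' hs.1.le (hs.2.le.trans hu₁) (n := n + 1) n.succ_pos
  rw [dslope_exp_zero_of_ne hs.1.ne', div_le_iff₀ hs.1, sub_le_iff_le_add', add_mul, ← add_assoc,
    sum_pow_div_factorial_succ_mul]
  refine exp_le.trans_eq ?_
  push_cast
  ring

/-- The value of `li` on `(1, ∞)`, by the expansion
`li x = γ + log (log x) + ∑_{k ≥ 1} (log x)ᵏ / (k · k!)`. -/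
noncomputable def logIntegral (x : ℝ) : ℝ :=
  eulerMascheroniConstant + log (log x) + eiEntire (log x)

lemma hasDerivAt_logIntegral {x : ℝ} (h₀ : 0 < x) (h₁ : x ≠ 1) :
    HasDerivAt logIntegral (1 / log x) x := by
  have hlog : log x ≠ 0 := log_ne_zero_of_pos_of_ne_one h₀ h₁
  have deriv_log := hasDerivAt_log h₀.ne'
  refine (((deriv_log.log hlog).const_add eulerMascheroniConstant).add
    ((hasDerivAt_eiEntire (log x)).comp x deriv_log)).congr_deriv ?_
  rw [dslope_exp_zero_of_ne hlog, exp_log h₀]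
  field_simp
  ring

lemma continuousOn_logIntegral : ContinuousOn logIntegral (Ioi 1) := fun _ hx =>
  (hasDerivAt_logIntegral (one_pos.trans hx) hx.ne').continuousAt.continuousWithinAt

lemma strictMonoOn_logIntegral : StrictMonoOn logIntegral (Ioi 1) := by
  refine strictMonoOn_of_deriv_pos (convex_Ioi 1) continuousOn_logIntegral fun x hx => ?_
  rw [interior_Ioi] at hx
  rw [(hasDerivAt_logIntegral (one_pos.trans hx) hx.ne').deriv]
  exact one_div_pos.2 (log_pos hx)

lemma integral_one_div_log {a b : ℝ} (ha : 1 < a) (hb : 1 < b) :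
    ∫ t in a..b, 1 / log t = logIntegral b - logIntegral a := by
  have one_lt {t : ℝ} (ht : t ∈ uIcc a b) : 1 < t := (lt_min ha hb).trans_le ht.1
  refine intervalIntegral.integral_eq_sub_of_hasDerivAt
    (fun t ht => hasDerivAt_logIntegral (one_pos.trans (one_lt ht)) (one_lt ht).ne') ?_
  refine ContinuousOn.intervalIntegrable (continuousOn_const.div ?_ fun t ht => ?_)
  · exact continuousOn_log.mono fun t ht => (one_pos.trans (one_lt ht)).ne'
  · exact (log_pos (one_lt ht)).ne'

lemma integral_zero_one_div_log {a : ℝ} (h₀ : 0 ≤ a) (h₁ : a < 1) :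
    ∫ t in (0 : ℝ)..a, 1 / log t = (∫ t in (0 : ℝ)..a, regInvLog t) + log (1 - a) := by
  have integral_pole : ∫ t in (0 : ℝ)..a, 1 / (t - 1) = log (1 - a) := by
    rw [intervalIntegral.integral_comp_sub_right (fun s => 1 / s),
      integral_one_div_of_neg (by norm_num) (by linarith)]
    congr 1
    ring
  have integrable_pole : IntervalIntegrable (fun t : ℝ => 1 / (t - 1)) volume 0 a := by
    refine ContinuousOn.intervalIntegrable (continuousOn_const.div (by fun_prop) fun t ht => ?_)
    rw [uIcc_of_le h₀] at ht
    linarith [ht.2]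
  rw [← integral_pole, ← intervalIntegral.integral_add
    (intervalIntegrable_regInvLog (left_mem_Icc.2 zero_le_one) ⟨h₀, h₁.le⟩) integrable_pole]
  simp only [regInvLog, sub_add_cancel]

lemma tendsto_integral_one_div_log_sub_log :
    Tendsto (fun ε => (∫ t in (0 : ℝ)..(1 - ε), 1 / log t) - log ε) (𝓝[>] 0)
      (𝓝 eulerMascheroniConstant) := by
  have continuousWithinAt_primitive :
      ContinuousWithinAt (fun a => ∫ t in (0 : ℝ)..a, regInvLog t) (Icc 0 1) 1 := by
    have h := intervalIntegral.continuousOn_primitive_interval' (a := 0)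
      (intervalIntegrable_regInvLog (left_mem_Icc.2 zero_le_one) (right_mem_Icc.2 zero_le_one))
      left_mem_uIcc
    rw [uIcc_of_le zero_le_one] at h
    exact h 1 (right_mem_Icc.2 zero_le_one)
  have eventually_mem : ∀ᶠ ε : ℝ in 𝓝[>] 0, ε ∈ Ioo 0 1 := Ioo_mem_nhdsGT one_pos
  have tendsto_one_sub : Tendsto (fun ε : ℝ => 1 - ε) (𝓝[>] 0) (𝓝[Icc 0 1] 1) := by
    refine tendsto_nhdsWithin_iff.2 ⟨?_, ?_⟩
    · exact ((continuous_const.sub continuous_id).tendsto' 0 1 (sub_zero 1)).mono_left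
        nhdsWithin_le_nhds
    · filter_upwards [eventually_mem] with ε hε
      constructor <;> linarith [hε.1, hε.2]
  rw [← integral_regInvLog]
  refine (continuousWithinAt_primitive.tendsto.comp tendsto_one_sub).congr' ?_
  filter_upwards [eventually_mem] with ε hε
  rw [integral_zero_one_div_log (by linarith [hε.2]) (by linarith [hε.1])]
  simp

lemma tendsto_log_log_one_add_sub_log :
    Tendsto (fun ε => log (log (1 + ε)) - log ε) (𝓝[>] 0) (𝓝 0) := by
  have tendsto_quotient : Tendsto (fun ε => log (1 + ε) / ε) (𝓝[>] 0) (𝓝 1) := by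
    have h := (hasDerivAt_log one_ne_zero).tendsto_slope_zero_right
    simpa [div_eq_inv_mul] using h
  have tendsto_log_quotient := tendsto_quotient.log one_ne_zero
  rw [log_one] at tendsto_log_quotient
  refine tendsto_log_quotient.congr' ?_
  filter_upwards [self_mem_nhdsWithin] with ε (hε : 0 < ε)
  exact log_div (log_pos (by linarith)).ne' hε.ne'

lemma tendsto_logIntegral_one_add_sub_log :
    Tendsto (fun ε => logIntegral (1 + ε) - log ε) (𝓝[>] 0) (𝓝 eulerMascheroniConstant) := by
  have tendsto_eiEntire : Tendsto (fun ε => eiEntire (log (1 + ε))) (𝓝[>] 0) (𝓝 0) := by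
    have h : ContinuousAt (fun ε => eiEntire (log (1 + ε))) 0 :=
      ContinuousAt.comp (hasDerivAt_eiEntire _).continuousAt
        (ContinuousAt.log (by fun_prop) (by norm_num))
    simpa [ContinuousAt, eiEntire] using h.mono_left nhdsWithin_le_nhds
  have h := (tendsto_log_log_one_add_sub_log.add tendsto_eiEntire).const_add eulerMascheroniConstant
  simp only [add_zero] at h
  refine h.congr fun ε => ?_
  rw [logIntegral]
  ring

theorem isLi_logIntegral {x : ℝ} (hx : 1 < x) : IsLi x (logIntegral x) := by
  have h := (tendsto_integral_one_div_log_sub_log.sub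
    tendsto_logIntegral_one_add_sub_log).add_const (logIntegral x)
  rw [sub_self, zero_add] at h
  refine h.congr' ?_
  filter_upwards [self_mem_nhdsWithin] with ε (hε : 0 < ε)
  rw [integral_one_div_log (by linarith) hx]
  ring

lemma IsLi.eq_logIntegral {x L : ℝ} (hx : 1 < x) (h : IsLi x L) : L = logIntegral x :=
  tendsto_nhds_unique h (isLi_logIntegral hx)

lemma logIntegral_exp (u : ℝ) :
    logIntegral (exp u) = eulerMascheroniConstant + log u + eiEntire u := by
  rw [logIntegral, log_exp]

-- For `u ≈ 1 / e` this moves the argument of `log` close to `1`, where the elementary bounds on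
-- `log` are sharp.
lemma log_eq_log_mul_exp_one_sub_one {u : ℝ} (hu : 0 < u) : log u = log (u * exp 1) - 1 := by
  rw [log_mul hu.ne' (exp_pos 1).ne', log_exp, add_sub_cancel_right]

lemma logIntegral_1_4513_neg : logIntegral 1.4513 < 0 := by
  have log_le : log 0.37247 ≤ (1.01248 - 1.01248⁻¹) / 2 - 1 := by
    rw [log_eq_log_mul_exp_one_sub_one (by norm_num)]
    have mul_exp_le : 0.37247 * exp 1 ≤ 1.01248 := by linarith [exp_one_lt_d9]
    gcongr
    exact (log_le_log (by positivity) mul_exp_le).trans (log_le_half_sub_inv (by norm_num))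
  have eiEntire_le := eiEntire_le_sum_add (u := 0.37247) (by norm_num) (by norm_num) 4
  have logIntegral_exp_neg : logIntegral (exp 0.37247) < 0 := by
    rw [logIntegral_exp]
    norm_num [Finset.sum_range_succ, Nat.factorial] at log_le eiEntire_le
    linarith [eulerMascheroniConstant_mem_Ioo.2]
  have lt_exp : 1.4513 < exp 0.37247 :=
    lt_of_lt_of_le (by norm_num [Finset.sum_range_succ, Nat.factorial])
      (sum_le_exp_of_nonneg (by norm_num) 6)
  have one_lt : (1 : ℝ) < 1.4513 := by norm_num
  exact (strictMonoOn_logIntegral one_lt (one_lt.trans lt_exp) lt_exp).trans logIntegral_exp_neg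

lemma logIntegral_1_4514_pos : 0 < logIntegral 1.4514 := by
  have le_log : 2 * (1.01261 - 1) / (1.01261 + 1) - 1 ≤ log 0.37252 := by
    rw [log_eq_log_mul_exp_one_sub_one (by norm_num)]
    have le_mul_exp : 1.01261 ≤ 0.37252 * exp 1 := by linarith [exp_one_gt_d9]
    gcongr
    exact (two_mul_sub_one_div_add_one_le_log (by norm_num)).trans
      (log_le_log (by norm_num) le_mul_exp)
  have le_eiEntire := sum_le_eiEntire (u := 0.37252) (by norm_num) 4
  have logIntegral_exp_pos : 0 < logIntegral (exp 0.37252) := by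
    rw [logIntegral_exp]
    norm_num [Finset.sum_range_succ, Nat.factorial] at le_log le_eiEntire
    linarith [eulerMascheroniConstant_mem_Ioo.1]
  have exp_lt : exp 0.37252 < 1.4514 :=
    (exp_bound' (by norm_num) (by norm_num) (n := 6) (by norm_num)).trans_lt
      (by norm_num [Finset.sum_range_succ, Nat.factorial])
  have one_lt : 1 < exp 0.37252 := one_lt_exp_iff.2 (by norm_num)
  exact logIntegral_exp_pos.trans (strictMonoOn_logIntegral one_lt (one_lt.trans exp_lt) exp_lt)

/-- There is a unique real `μ > 1` with `li(μ) = 0` (the Ramanujan–Soldner constant), and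
it satisfies `1.4513 < μ < 1.4514`. -/
theorem soldner_constant :
    ∃ μ : ℝ, 1 < μ ∧ IsLi μ 0 ∧ 1.4513 < μ ∧ μ < 1.4514 ∧
      ∀ μ' : ℝ, 1 < μ' → IsLi μ' 0 → μ' = μ := by
  have one_lt {x : ℝ} (hx : 1.4513 ≤ x) : 1 < x := lt_of_lt_of_le (by norm_num) hx
  obtain ⟨μ, ⟨lower, upper⟩, logIntegral_μ⟩ :=
    intermediate_value_Ioo (by norm_num)
      (continuousOn_logIntegral.mono fun _ hx => one_lt hx.1)
      ⟨logIntegral_1_4513_neg, logIntegral_1_4514_pos⟩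
  have one_lt_μ : 1 < μ := one_lt lower.le
  refine ⟨μ, one_lt_μ, logIntegral_μ ▸ isLi_logIntegral one_lt_μ, lower, upper,
    fun ν one_lt_ν isLi_ν => ?_⟩
  exact strictMonoOn_logIntegral.injOn one_lt_ν one_lt_μ
    ((isLi_ν.eq_logIntegral one_lt_ν).symm.trans logIntegral_μ.symm)
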